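/- Asymptotics of the collision frequency for non-zero mass: for every β, γ > 0 there exist constants c, C > 0 (depending on β, γ) such that c · sin(p/2)^{5/3} ≤ a(p) ≤ C · sin(p/2)^{5/3} for all p ∈ [0,2π]. In particular a is nonnegative and vanishes on [0,2π] only at p = 0 and p = 2π. -/

import Mathlib

open MeasureTheory Real Set

noncomputable section

/-- The dispersion relation `ω(p) = |sin(p/2)|`. -/
def ω (p : ℝ) : ℝ := |Real.sin (p / 2)|

/-- Parameterization `h(x,z)` of the resonant manifold. -/
def resH (x z : ℝ) : ℝ :=
  (z - x) / 2 + 2 * Real.arcsin (Real.tan (|z - x| / 4) * Real.cos ((x + z) / 4))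

/-- `F₊(x,z) = (cos(x/2)+cos(z/2))² + 4 sin(x/2) sin(z/2)`. -/
def Fplus (x z : ℝ) : ℝ :=
  (Real.cos (x / 2) + Real.cos (z / 2)) ^ 2 + 4 * Real.sin (x / 2) * Real.sin (z / 2)

/-- `F₋(x,z) = (cos(x/2)+cos(z/2))² − 4 sin(x/2) sin(z/2)`. -/
def Fminus (x z : ℝ) : ℝ :=
  (Real.cos (x / 2) + Real.cos (z / 2)) ^ 2 - 4 * Real.sin (x / 2) * Real.sin (z / 2)

/-- The Rayleigh–Jeans equilibrium `𝔣(p) = 1/(βω(p)+γ)`. -/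
def fRJ (β γ p : ℝ) : ℝ := 1 / (β * ω p + γ)

/-- The collision frequency `a(p)`, with `p₁ = h(p,p₂)` and `p₃ = p + p₁ − p₂`. -/
def afreq (β γ p : ℝ) : ℝ :=
  ω p / fRJ β γ p *
    ∫ q in (0:ℝ)..(2 * π),
      ω (resH p q) * ω q * ω (p + resH p q - q) *
        (fRJ β γ (resH p q) * fRJ β γ q * fRJ β γ (p + resH p q - q)) / Real.sqrt (Fplus p q)

/-! The resonance condition gives `ω(p₁) ω(p₃) = tan²((p₂ - p)/4) sin(p/2) sin(p₂/2)`.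
With `x = p/2` and `u = π - p₂/2` the integrand therefore becomes, up to equilibrium factors bounded
above and below, `sin x · (sin u · cot((x + u)/2))² / √F` with
`F = (2 sin²((x + u)/2))² + 4 sin x sin u cos²((x + u)/2)`. This is invariant under
`(x, u) ↦ (π - x, π - u)`, so let `0 < x ≤ π/2`. Then the squared factor is bounded, and `√F` is at
least of order `√(u sin x)` for `u ≤ π/2` and at least of order `u²` in general. The two bounds
agree at `u = t := (sin x)^{1/3}`, where both are of order `t²`, so the integral has the size of
`t³ · t / t² = t²`; multiplying by `ω(p) = t³` yields `sin(p/2)^{5/3}`. -/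

section IntervalIntegral

variable {f g : ℝ → ℝ} {a b : ℝ}

lemma intervalIntegrable_of_nonneg_of_le (hab : a ≤ b) (hg : IntervalIntegrable g volume a b)
    (hf : Measurable f) (hf0 : ∀ u ∈ Ioc a b, 0 ≤ f u) (hfg : ∀ u ∈ Ioc a b, f u ≤ g u) :
    IntervalIntegrable f volume a b := by
  refine hg.mono_fun' hf.aestronglyMeasurable ?_
  rw [uIoc_of_le hab]
  filter_upwards [ae_restrict_mem measurableSet_Ioc] with u hu
  rw [Real.norm_of_nonneg (hf0 u hu)]
  exact hfg u hu

lemma integral_le_of_forall_Ioc_le (hab : a ≤ b) (hf : IntervalIntegrable f volume a b)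
    (hg : IntervalIntegrable g volume a b) (hfg : ∀ u ∈ Ioc a b, f u ≤ g u) :
    ∫ u in a..b, f u ≤ ∫ u in a..b, g u :=
  intervalIntegral.integral_mono_on_of_le_Ioo hab hf hg fun u hu ↦ hfg u (Ioo_subset_Ioc_self hu)

lemma intervalIntegrable_rpow_of_pos (ha : 0 < a) (hab : a ≤ b) (r : ℝ) :
    IntervalIntegrable (fun u ↦ u ^ r) volume a b :=
  intervalIntegral.intervalIntegrable_rpow (Or.inr (notMem_uIcc_of_lt ha (ha.trans_le hab)))

lemma integral_rpow_le_of_lt_neg_one {r : ℝ} (ha : 0 < a) (hab : a ≤ b) (hr : r < -1) :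
    ∫ u in a..b, u ^ r ≤ a ^ (r + 1) / -(r + 1) := by
  have h0 : (0 : ℝ) ∉ uIcc a b := notMem_uIcc_of_lt ha (ha.trans_le hab)
  rw [integral_rpow (Or.inr ⟨hr.ne, h0⟩), ← neg_div_neg_eq, neg_sub]
  have hb : 0 ≤ b ^ (r + 1) := Real.rpow_nonneg (ha.le.trans hab) _
  exact div_le_div_of_nonneg_right (by linarith) (by linarith)

lemma integral_zero_rpow {r : ℝ} (hr : -1 < r) (b : ℝ) :
    ∫ u in (0 : ℝ)..b, u ^ r = b ^ (r + 1) / (r + 1) := by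
  rw [integral_rpow (Or.inl hr), Real.zero_rpow (by linarith), sub_zero]

section TwoPowers

variable {A B r s t : ℝ}

lemma intervalIntegrable_of_le_rpow (hr : -1 < r) (ht : 0 < t) (htb : t ≤ b) (hf : Measurable f)
    (hf0 : ∀ u ∈ Ioc 0 b, 0 ≤ f u) (hA : ∀ u ∈ Ioc 0 t, f u ≤ A * u ^ r)
    (hB : ∀ u ∈ Ioc t b, f u ≤ B * u ^ s) :
    IntervalIntegrable f volume 0 b :=
  (intervalIntegrable_of_nonneg_of_le ht.le
      ((intervalIntegral.intervalIntegrable_rpow' hr).const_mul A) hf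
      (fun u hu ↦ hf0 u ⟨hu.1, hu.2.trans htb⟩) hA).trans
    (intervalIntegrable_of_nonneg_of_le htb
      ((intervalIntegrable_rpow_of_pos ht htb s).const_mul B) hf
      (fun u hu ↦ hf0 u ⟨ht.trans hu.1, hu.2⟩) hB)

lemma integral_le_of_le_rpow (hr : -1 < r) (hs : s < -1) (ht : 0 < t) (htb : t ≤ b) (hB0 : 0 ≤ B)
    (hf : Measurable f) (hf0 : ∀ u ∈ Ioc 0 b, 0 ≤ f u) (hA : ∀ u ∈ Ioc 0 t, f u ≤ A * u ^ r)
    (hB : ∀ u ∈ Ioc t b, f u ≤ B * u ^ s) :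
    ∫ u in (0 : ℝ)..b, f u ≤ A * (t ^ (r + 1) / (r + 1)) + B * (t ^ (s + 1) / -(s + 1)) := by
  have hint := intervalIntegrable_of_le_rpow hr ht htb hf hf0 hA hB
  have htmem : t ∈ uIcc 0 b := mem_uIcc_of_le ht.le htb
  have hnear : IntervalIntegrable f volume 0 t := hint.mono_set (uIcc_subset_uIcc_left htmem)
  have hfar : IntervalIntegrable f volume t b := hint.mono_set (uIcc_subset_uIcc_right htmem)
  rw [← intervalIntegral.integral_add_adjacent_intervals hnear hfar]
  refine add_le_add ?_ ?_
  · calc ∫ u in (0 : ℝ)..t, f u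
        ≤ ∫ u in (0 : ℝ)..t, A * u ^ r := integral_le_of_forall_Ioc_le ht.le hnear
          ((intervalIntegral.intervalIntegrable_rpow' hr).const_mul A) hA
      _ = A * (t ^ (r + 1) / (r + 1)) := by
        rw [intervalIntegral.integral_const_mul, integral_zero_rpow hr]
  · calc ∫ u in t..b, f u
        ≤ ∫ u in t..b, B * u ^ s := integral_le_of_forall_Ioc_le htb hfar
          ((intervalIntegrable_rpow_of_pos ht htb s).const_mul B) hB
      _ = B * ∫ u in t..b, u ^ s := intervalIntegral.integral_const_mul _ _
      _ ≤ B * (t ^ (s + 1) / -(s + 1)) := by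
        gcongr
        exact integral_rpow_le_of_lt_neg_one ht htb hs

end TwoPowers

lemma mul_sub_le_integral_of_le_on_Icc {c d k : ℝ} (hac : a ≤ c) (hcd : c ≤ d) (hdb : d ≤ b)
    (hf : IntervalIntegrable f volume a b) (hf0 : ∀ u ∈ Ioc a b, 0 ≤ f u)
    (hk : ∀ u ∈ Icc c d, k ≤ f u) :
    k * (d - c) ≤ ∫ u in a..b, f u := by
  have hsub : uIcc c d ⊆ uIcc a b := by
    rw [uIcc_of_le hcd, uIcc_of_le (hac.trans (hcd.trans hdb))]
    exact Icc_subset_Icc hac hdb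
  calc k * (d - c) = ∫ _ in c..d, k := by
        rw [intervalIntegral.integral_const, smul_eq_mul, mul_comm]
    _ ≤ ∫ u in c..d, f u := intervalIntegral.integral_mono_on hcd intervalIntegrable_const
        (hf.mono_set hsub) hk
    _ ≤ ∫ u in a..b, f u := by
        refine intervalIntegral.integral_mono_interval hac hcd hdb ?_ hf
        filter_upwards [ae_restrict_mem measurableSet_Ioc] with u hu using hf0 u hu

lemma integral_mul_mem_Icc {w : ℝ → ℝ} {A B : ℝ} (hab : a ≤ b)
    (hf : IntervalIntegrable f volume a b) (hf0 : ∀ u, 0 ≤ f u) (hw : Measurable w)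
    (hwAB : ∀ u, w u ∈ Icc A B) :
    ∫ u in a..b, w u * f u ∈ Icc (A * ∫ u in a..b, f u) (B * ∫ u in a..b, f u) := by
  have hwf : IntervalIntegrable (fun u ↦ w u * f u) volume a b := by
    rw [intervalIntegrable_iff] at hf ⊢
    refine Integrable.bdd_mul (c := max |A| |B|) hf hw.aestronglyMeasurable ?_
    exact Filter.Eventually.of_forall fun u ↦ abs_le_max_abs_abs (hwAB u).1 (hwAB u).2
  rw [← intervalIntegral.integral_const_mul, ← intervalIntegral.integral_const_mul]
  exact ⟨intervalIntegral.integral_mono_on hab (hf.const_mul A) hwf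
      fun u _ ↦ mul_le_mul_of_nonneg_right (hwAB u).1 (hf0 u),
    intervalIntegral.integral_mono_on hab hwf (hf.const_mul B)
      fun u _ ↦ mul_le_mul_of_nonneg_right (hwAB u).2 (hf0 u)⟩

end IntervalIntegral

section Trigonometry

lemma sin_add_mul_sin_sub (a b : ℝ) : sin (a + b) * sin (a - b) = sin a ^ 2 - sin b ^ 2 := by
  rw [sin_add, sin_sub]
  linear_combination sin a ^ 2 * sin_sq_add_cos_sq b - sin b ^ 2 * sin_sq_add_cos_sq a

lemma sin_mul_sin_eq_sq_sub_sq (x u : ℝ) :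
    sin x * sin u = sin ((x + u) / 2) ^ 2 - sin ((x - u) / 2) ^ 2 := by
  rw [← sin_add_mul_sin_sub]
  congr 2 <;> ring

lemma half_le_sin {u : ℝ} (hu0 : 0 ≤ u) (hu : u ≤ π / 2) : u / 2 ≤ sin u := by
  have hπ : 1 / 2 ≤ 2 / π := by
    rw [div_le_div_iff₀ two_pos pi_pos]
    linarith [pi_lt_four]
  calc u / 2 = 1 / 2 * u := by ring
    _ ≤ 2 / π * u := by gcongr
    _ ≤ sin u := mul_le_sin hu0 hu

lemma sin_half_sq_le_two_mul_sin_sq {x u : ℝ} (hx0 : 0 ≤ x) (hx : x ≤ π / 2) (hu0 : 0 ≤ u)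
    (hu : u ≤ π) : sin (u / 2) ^ 2 ≤ 2 * sin ((x + u) / 2) ^ 2 := by
  have hsinx : 0 ≤ sin (x / 2) := sin_nonneg_of_nonneg_of_le_pi (by linarith) (by linarith)
  have hsinu : 0 ≤ sin (u / 2) := sin_nonneg_of_nonneg_of_le_pi (by linarith) (by linarith)
  have hcosx : 0 ≤ cos (x / 2) := cos_nonneg_of_mem_Icc ⟨by linarith, by linarith⟩
  have hcosu : 0 ≤ cos (u / 2) := cos_nonneg_of_mem_Icc ⟨by linarith, by linarith⟩
  have hcosx_sq : 1 / 2 ≤ cos (x / 2) ^ 2 := by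
    rw [cos_sq, mul_div_cancel₀ x two_ne_zero]
    linarith [cos_nonneg_of_mem_Icc (x := x) ⟨by linarith, hx⟩]
  have hle : cos (x / 2) * sin (u / 2) ≤ sin ((x + u) / 2) := by
    rw [add_div, sin_add]
    linarith [mul_nonneg hsinx hcosu]
  calc sin (u / 2) ^ 2 = 2 * (1 / 2 * sin (u / 2) ^ 2) := by ring
    _ ≤ 2 * (cos (x / 2) ^ 2 * sin (u / 2) ^ 2) := by gcongr
    _ = 2 * (cos (x / 2) * sin (u / 2)) ^ 2 := by ring
    _ ≤ 2 * sin ((x + u) / 2) ^ 2 := by gcongr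

lemma cot_pi_sub (a : ℝ) : cot (π - a) = -cot a := by
  rw [cot_eq_cos_div_sin, cot_eq_cos_div_sin, cos_pi_sub, sin_pi_sub, neg_div]

lemma sq_sin_mul_cot_le {x u : ℝ} (hx0 : 0 < x) (hx : x ≤ π / 2) (hu0 : 0 ≤ u) (hu : u ≤ π) :
    (sin u * cot ((x + u) / 2)) ^ 2 ≤ 8 := by
  have hsin : 0 < sin ((x + u) / 2) := sin_pos_of_pos_of_lt_pi (by linarith) (by linarith)
  have hsinu : sin u ^ 2 ≤ 8 * sin ((x + u) / 2) ^ 2 :=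
    calc sin u ^ 2 = 4 * sin (u / 2) ^ 2 * cos (u / 2) ^ 2 := by
          rw [← mul_div_cancel₀ u two_ne_zero, sin_two_mul, mul_div_cancel₀ u two_ne_zero]
          ring
      _ ≤ 4 * sin (u / 2) ^ 2 := mul_le_of_le_one_right (by positivity) (cos_sq_le_one _)
      _ ≤ 8 * sin ((x + u) / 2) ^ 2 := by
          linarith [sin_half_sq_le_two_mul_sin_sq hx0.le hx hu0 hu]
  rw [cot_eq_cos_div_sin, ← mul_div_assoc, div_pow, mul_pow, div_le_iff₀ (by positivity)]
  exact (mul_le_of_le_one_right (sq_nonneg _) (cos_sq_le_one _)).trans hsinu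

lemma le_sin_mul_cot {x u t : ℝ} (ht0 : 0 < t) (ht1 : t ≤ 1) (hx0 : 0 ≤ x) (hx : x ≤ 8 / 5 * t)
    (htu : t / 2 ≤ u) (hut : u ≤ t) : 1 / 100 ≤ sin u * cot ((x + u) / 2) := by
  have hπ := pi_gt_three
  set a := (x + u) / 2 with ha
  have ha0 : 0 < a := by linarith
  have hat : a ≤ 13 / 10 * t := by linarith
  have hsinu : t / 4 ≤ sin u := by
    linarith [half_le_sin (u := u) (by linarith) (by linarith)]
  have hcosa : 1 / 10 ≤ cos a := by nlinarith [one_sub_sq_div_two_le_cos (x := a)]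
  have hsina : 0 < sin a := sin_pos_of_pos_of_lt_pi ha0 (by linarith)
  rw [cot_eq_cos_div_sin, ← mul_div_assoc, le_div_iff₀ hsina]
  calc 1 / 100 * sin a ≤ 1 / 100 * (13 / 10 * t) := by
        gcongr
        exact (sin_le ha0.le).trans hat
    _ ≤ t / 4 * (1 / 10) := by linarith
    _ ≤ sin u * cos a := mul_le_mul hsinu hcosa (by norm_num) (by linarith)

lemma le_one_of_sin_eq_pow_three {x t : ℝ} (ht0 : 0 ≤ t) (hxt : sin x = t ^ 3) : t ≤ 1 := by
  rw [← pow_le_one_iff_of_nonneg ht0 three_ne_zero, ← hxt]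
  exact sin_le_one x

lemma le_mul_of_sin_eq_pow_three {x t : ℝ} (ht0 : 0 ≤ t) (hx0 : 0 ≤ x) (hx : x ≤ π / 2)
    (hxt : sin x = t ^ 3) : x ≤ 8 / 5 * t := by
  have hsin : 2 / π * x ≤ t :=
    calc 2 / π * x ≤ t ^ 3 := hxt ▸ mul_le_sin hx0 hx
      _ ≤ t := pow_le_of_le_one ht0 (le_one_of_sin_eq_pow_three ht0 hxt) three_ne_zero
  rw [div_mul_eq_mul_div, div_le_iff₀ pi_pos] at hsin
  nlinarith [pi_lt_d2]

end Trigonometry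

/-- The function `F₊` in the half-angles `x = p/2` and `u = π - p₂/2`. -/
def reflectedF (x u : ℝ) : ℝ := (cos x - cos u) ^ 2 + 4 * sin x * sin u

/-- The collision kernel in the half-angles `x = p/2` and `u = π - p₂/2`; the reflection of `p₂`
moves the concentration of the kernel for small `p` from `p₂ = 2π` to `u = 0`. -/
def reducedKernel (x u : ℝ) : ℝ :=
  sin x * (sin u * cot ((x + u) / 2)) ^ 2 / √(reflectedF x u)

section ReflectedF

variable {x u t : ℝ}

lemma reflectedF_eq (x u : ℝ) : reflectedF x u =
    (2 * sin ((x + u) / 2) ^ 2) ^ 2 + 4 * (sin x * sin u) * cos ((x + u) / 2) ^ 2 := by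
  rw [reflectedF, cos_sub_cos, mul_assoc 4, sin_mul_sin_eq_sq_sub_sq, cos_sq']
  ring

lemma sq_div_pi_sq_le_sqrt_reflectedF (hx0 : 0 ≤ x) (hx : x ≤ π / 2) (hu0 : 0 ≤ u) (hu : u ≤ π) :
    u ^ 2 / π ^ 2 ≤ √(reflectedF x u) := by
  have hsinx : 0 ≤ sin x := sin_nonneg_of_nonneg_of_le_pi hx0 (by linarith)
  have hsinu : 0 ≤ sin u := sin_nonneg_of_nonneg_of_le_pi hu0 hu
  have hsin : u / π ≤ sin (u / 2) := by
    have := mul_le_sin (x := u / 2) (by linarith) (by linarith)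
    convert this using 1
    ring
  calc u ^ 2 / π ^ 2 = (u / π) ^ 2 := (div_pow u π 2).symm
    _ ≤ sin (u / 2) ^ 2 := by gcongr
    _ ≤ 2 * sin ((x + u) / 2) ^ 2 := sin_half_sq_le_two_mul_sin_sq hx0 hx hu0 hu
    _ ≤ √(reflectedF x u) := by
      apply le_sqrt_of_sq_le
      rw [reflectedF_eq]
      exact le_add_of_nonneg_right (by positivity)

lemma sin_mul_le_reflectedF (hsinx : 0 ≤ sin x) (hu0 : 0 ≤ u) (hu : u ≤ π / 2) :
    sin x * u ≤ reflectedF x u := by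
  have hmul := mul_le_mul_of_nonneg_left (half_le_sin hu0 hu) hsinx
  have hpos := mul_nonneg hsinx hu0
  rw [reflectedF]
  linarith [sq_nonneg (cos x - cos u)]

lemma reflectedF_le (ht0 : 0 ≤ t) (hx0 : 0 ≤ x) (hx : x ≤ 8 / 5 * t) (hxt : sin x = t ^ 3)
    (hu0 : 0 ≤ u) (hut : u ≤ t) : reflectedF x u ≤ (4 * t ^ 2) ^ 2 := by
  have hsina : sin ((x + u) / 2) ^ 2 ≤ (13 / 10 * t) ^ 2 :=
    sin_sq_le_sq.trans (by gcongr; linarith)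
  have hsin : sin x * sin u ≤ t ^ 3 * t := by
    rw [hxt]
    gcongr
    exact (sin_le hu0).trans hut
  calc reflectedF x u
      ≤ (2 * (13 / 10 * t) ^ 2) ^ 2 + 4 * (t ^ 3 * t) * 1 := by
        rw [reflectedF_eq]
        gcongr
        exact cos_sq_le_one _
    _ ≤ (4 * t ^ 2) ^ 2 := by nlinarith [pow_nonneg ht0 4]

end ReflectedF

section ReducedKernel

variable {x u t : ℝ}

lemma reducedKernel_nonneg (hsinx : 0 ≤ sin x) : 0 ≤ reducedKernel x u := by
  rw [reducedKernel]
  positivity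

lemma measurable_reducedKernel (x : ℝ) : Measurable (reducedKernel x) := by
  unfold reducedKernel reflectedF
  simp only [cot_eq_cos_div_sin]
  fun_prop

lemma reducedKernel_pi_sub (x u : ℝ) : reducedKernel (π - x) (π - u) = reducedKernel x u := by
  have ha : (π - x + (π - u)) / 2 = π - (x + u) / 2 := by ring
  simp only [reducedKernel, reflectedF, ha, cot_pi_sub, sin_pi_sub, cos_pi_sub]
  ring_nf

lemma reducedKernel_le_div (hx0 : 0 < x) (hx : x ≤ π / 2) (hu0 : 0 ≤ u) (hu : u ≤ π) {k : ℝ}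
    (hk0 : 0 < k) (hk : k ≤ √(reflectedF x u)) : reducedKernel x u ≤ 8 * sin x / k := by
  have hsinx : 0 ≤ sin x := sin_nonneg_of_nonneg_of_le_pi hx0.le (by linarith)
  rw [reducedKernel, mul_comm 8]
  gcongr
  exact sq_sin_mul_cot_le hx0 hx hu0 hu

lemma reducedKernel_le_rpow_neg_half (hx0 : 0 < x) (hx : x ≤ π / 2) (hu0 : 0 < u)
    (hu : u ≤ π / 2) : reducedKernel x u ≤ 8 * √(sin x) * u ^ (-(1 / 2) : ℝ) := by
  have hsinx : 0 < sin x := sin_pos_of_pos_of_lt_pi hx0 (by linarith)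
  calc reducedKernel x u ≤ 8 * sin x / √(sin x * u) :=
        reducedKernel_le_div hx0 hx hu0.le (by linarith) (by positivity)
          (sqrt_le_sqrt (sin_mul_le_reflectedF hsinx.le hu0.le hu))
    _ = 8 * (sin x / √(sin x)) / √u := by
        rw [sqrt_mul hsinx.le]
        ring
    _ = 8 * √(sin x) * u ^ (-(1 / 2) : ℝ) := by
        rw [div_sqrt, rpow_neg hu0.le, ← sqrt_eq_rpow, div_eq_mul_inv]

lemma reducedKernel_le_rpow_neg_two (hx0 : 0 < x) (hx : x ≤ π / 2) (hu0 : 0 < u) (hu : u ≤ π) :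
    reducedKernel x u ≤ 8 * π ^ 2 * sin x * u ^ (-2 : ℝ) := by
  calc reducedKernel x u ≤ 8 * sin x / (u ^ 2 / π ^ 2) :=
        reducedKernel_le_div hx0 hx hu0.le hu (by positivity)
          (sq_div_pi_sq_le_sqrt_reflectedF hx0.le hx hu0.le hu)
    _ = 8 * π ^ 2 * sin x * u ^ (-2 : ℝ) := by
        rw [rpow_neg hu0.le, rpow_two]
        field_simp

lemma le_reducedKernel (hx0 : 0 < x) (hx : x ≤ π / 2) (ht0 : 0 < t) (hxt : sin x = t ^ 3)
    (htu : t / 2 ≤ u) (hut : u ≤ t) : t / 40000 ≤ reducedKernel x u := by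
  have ht1 := le_one_of_sin_eq_pow_three ht0.le hxt
  have hxt_le := le_mul_of_sin_eq_pow_three ht0.le hx0.le hx hxt
  have hu0 : 0 < u := by linarith
  have hu : u ≤ π / 2 := by linarith [pi_gt_three]
  have hcot := le_sin_mul_cot ht0 ht1 hx0.le hxt_le htu hut
  have hF0 : 0 < reflectedF x u :=
    (by rw [hxt]; positivity : 0 < sin x * u).trans_le
      (sin_mul_le_reflectedF (by rw [hxt]; positivity) hu0.le hu)
  have hF : √(reflectedF x u) ≤ 4 * t ^ 2 :=
    sqrt_le_iff.mpr ⟨by positivity, reflectedF_le ht0.le hx0.le hxt_le hxt hu0.le hut⟩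
  calc t / 40000 = t ^ 3 * (1 / 100) ^ 2 / (4 * t ^ 2) := by
        field_simp
        norm_num
    _ ≤ reducedKernel x u := by
        rw [reducedKernel, hxt]
        gcongr

lemma intervalIntegrable_reducedKernel_of_le (hx0 : 0 < x) (hx : x ≤ π / 2) :
    IntervalIntegrable (reducedKernel x) volume 0 π := by
  have hsinx : 0 ≤ sin x := sin_nonneg_of_nonneg_of_le_pi hx0.le (by linarith)
  exact intervalIntegrable_of_le_rpow (t := π / 2) (b := π) (s := -2)
    (by norm_num) (by positivity) (by linarith [pi_pos]) (measurable_reducedKernel x)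
    (fun u _ ↦ reducedKernel_nonneg hsinx)
    (fun u hu ↦ reducedKernel_le_rpow_neg_half hx0 hx hu.1 hu.2)
    (fun u hu ↦ reducedKernel_le_rpow_neg_two hx0 hx (pi_div_two_pos.trans hu.1) hu.2)

lemma integral_reducedKernel_le (hx0 : 0 < x) (hx : x ≤ π / 2) (ht0 : 0 < t)
    (hxt : sin x = t ^ 3) : ∫ u in (0 : ℝ)..π, reducedKernel x u ≤ (16 + 8 * π ^ 2) * t ^ 2 := by
  have htπ : t ≤ π / 2 := by
    linarith [le_one_of_sin_eq_pow_three ht0.le hxt, pi_gt_three]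
  have hsinx : 0 ≤ sin x := hxt ▸ by positivity
  have hsqrt : √(t ^ 3) * √t = t ^ 2 := by
    rw [← sqrt_mul (by positivity), ← sqrt_sq (sq_nonneg t)]
    ring_nf
  calc ∫ u in (0 : ℝ)..π, reducedKernel x u
      ≤ 8 * √(sin x) * (t ^ (-(1 / 2) + 1 : ℝ) / (-(1 / 2) + 1)) +
          8 * π ^ 2 * sin x * (t ^ (-2 + 1 : ℝ) / -(-2 + 1)) :=
        integral_le_of_le_rpow (by norm_num) (by norm_num) ht0 (by linarith) (by positivity)
          (measurable_reducedKernel x) (fun u _ ↦ reducedKernel_nonneg hsinx)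
          (fun u hu ↦ reducedKernel_le_rpow_neg_half hx0 hx hu.1 (hu.2.trans htπ))
          (fun u hu ↦ reducedKernel_le_rpow_neg_two hx0 hx (ht0.trans hu.1) hu.2)
    _ = 16 * (√(t ^ 3) * √t) + 8 * π ^ 2 * (t ^ 3 * t⁻¹) := by
        rw [hxt, ← rpow_neg_one, sqrt_eq_rpow t]
        norm_num
        ring
    _ = (16 + 8 * π ^ 2) * t ^ 2 := by
        rw [hsqrt]
        field_simp

lemma le_integral_reducedKernel (hx0 : 0 < x) (hx : x ≤ π / 2) (ht0 : 0 < t)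
    (hxt : sin x = t ^ 3) : t ^ 2 / 80000 ≤ ∫ u in (0 : ℝ)..π, reducedKernel x u := by
  have htπ : t ≤ π := by
    linarith [le_one_of_sin_eq_pow_three ht0.le hxt, pi_gt_three]
  calc t ^ 2 / 80000 = t / 40000 * (t - t / 2) := by ring
    _ ≤ ∫ u in (0 : ℝ)..π, reducedKernel x u :=
      mul_sub_le_integral_of_le_on_Icc (by positivity) (by linarith) htπ
        (intervalIntegrable_reducedKernel_of_le hx0 hx)
        (fun u _ ↦ reducedKernel_nonneg (hxt ▸ by positivity))
        (fun u hu ↦ le_reducedKernel hx0 hx ht0 hxt hu.1 hu.2)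

lemma integral_reducedKernel_pi_sub (x : ℝ) :
    ∫ u in (0 : ℝ)..π, reducedKernel (π - x) u = ∫ u in (0 : ℝ)..π, reducedKernel x u := by
  have h := intervalIntegral.integral_comp_sub_left (a := 0) (b := π) (reducedKernel (π - x)) π
  simp only [reducedKernel_pi_sub, sub_self, sub_zero] at h
  exact h.symm

lemma intervalIntegrable_reducedKernel (hx : x ∈ Ioo 0 π) :
    IntervalIntegrable (reducedKernel x) volume 0 π := by
  rcases le_total x (π / 2) with hle | hge
  · exact intervalIntegrable_reducedKernel_of_le hx.1 hle
  · have h := (intervalIntegrable_reducedKernel_of_le (x := π - x) (by linarith [hx.2])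
      (by linarith)).comp_sub_left π
    simp only [reducedKernel_pi_sub, sub_self, sub_zero] at h
    exact h.symm

lemma integral_reducedKernel_mem_Icc (hx : x ∈ Ioo 0 π) (ht0 : 0 < t) (hxt : sin x = t ^ 3) :
    ∫ u in (0 : ℝ)..π, reducedKernel x u ∈ Icc (t ^ 2 / 80000) ((16 + 8 * π ^ 2) * t ^ 2) := by
  rcases le_total x (π / 2) with hle | hge
  · exact ⟨le_integral_reducedKernel hx.1 hle ht0 hxt,
      integral_reducedKernel_le hx.1 hle ht0 hxt⟩
  · have hx0' : 0 < π - x := by linarith [hx.2]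
    have hx' : π - x ≤ π / 2 := by linarith
    have hxt' : sin (π - x) = t ^ 3 := by rw [sin_pi_sub, hxt]
    rw [← integral_reducedKernel_pi_sub]
    exact ⟨le_integral_reducedKernel hx0' hx' ht0 hxt',
      integral_reducedKernel_le hx0' hx' ht0 hxt'⟩

end ReducedKernel

/-- The integrand of the collision frequency without its equilibrium factors. -/
def collisionKernel (p q : ℝ) : ℝ :=
  ω (resH p q) * ω q * ω (p + resH p q - q) / √(Fplus p q)

section CollisionKernel

variable {p q t : ℝ}

lemma omega_nonneg (p : ℝ) : 0 ≤ ω p := abs_nonneg _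

lemma omega_eq_sin (hp : p ∈ Icc 0 (2 * π)) : ω p = sin (p / 2) :=
  abs_of_nonneg (sin_nonneg_of_nonneg_of_le_pi (by linarith [hp.1]) (by linarith [hp.2]))

lemma collisionKernel_nonneg (p q : ℝ) : 0 ≤ collisionKernel p q :=
  div_nonneg (mul_nonneg (mul_nonneg (omega_nonneg _) (omega_nonneg _)) (omega_nonneg _))
    (sqrt_nonneg _)

lemma sq_tan_mul_cos (hcos : cos ((q - p) / 4) ≠ 0) :
    (tan (|q - p| / 4) * cos ((p + q) / 4)) ^ 2 =
      sin ((q - p) / 4) ^ 2 - tan ((q - p) / 4) ^ 2 * (sin (p / 2) * sin (q / 2)) := by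
  have htan_abs : tan (|q - p| / 4) ^ 2 = tan ((q - p) / 4) ^ 2 := by
    rcases abs_choice (q - p) with h | h <;> rw [h]
    rw [neg_div, tan_neg, neg_sq]
  have hsin : sin (q / 2) * sin (p / 2) = sin ((p + q) / 4) ^ 2 - sin ((q - p) / 4) ^ 2 := by
    rw [sin_mul_sin_eq_sq_sub_sq]
    congr 3 <;> ring
  have htan_cos : tan ((q - p) / 4) ^ 2 * (1 - sin ((q - p) / 4) ^ 2) = sin ((q - p) / 4) ^ 2 := by
    rw [← cos_sq', ← mul_pow, tan_mul_cos hcos]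
  rw [mul_pow, htan_abs, mul_comm (sin (p / 2)), hsin, cos_sq']
  linear_combination htan_cos

lemma omega_resH_mul_omega (hp : p ∈ Ioo 0 (2 * π)) (hq : q ∈ Icc 0 (2 * π)) :
    ω (resH p q) * ω (p + resH p q - q) =
      tan ((q - p) / 4) ^ 2 * (sin (p / 2) * sin (q / 2)) := by
  set A := tan (|q - p| / 4) * cos ((p + q) / 4) with hA
  have hsin : 0 ≤ sin (p / 2) * sin (q / 2) := by
    rw [← omega_eq_sin (Ioo_subset_Icc_self hp), ← omega_eq_sin hq]
    exact mul_nonneg (omega_nonneg p) (omega_nonneg q)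
  have hcos : cos ((q - p) / 4) ≠ 0 :=
    (cos_pos_of_mem_Ioo ⟨by linarith [hp.2, hq.1], by linarith [hp.1, hq.2]⟩).ne'
  have hA_sq := sq_tan_mul_cos hcos
  rw [← hA] at hA_sq
  have hA_abs : |A| ≤ 1 := by
    rw [← sq_le_one_iff_abs_le_one, hA_sq]
    exact (sub_le_self _ (by positivity)).trans (sin_sq_le_one _)
  have hp₁ : resH p q / 2 = arcsin A + (q - p) / 4 := by
    rw [resH]
    ring
  have hp₃ : (p + resH p q - q) / 2 = arcsin A - (q - p) / 4 := by
    rw [resH]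
    ring
  rw [ω, ω, hp₁, hp₃, ← abs_mul, sin_add_mul_sin_sub,
    sin_arcsin (neg_le_of_abs_le hA_abs) (le_of_abs_le hA_abs), hA_sq, sub_sub_cancel_left,
    abs_neg, abs_of_nonneg (by positivity)]

lemma collisionKernel_eq_reducedKernel (hp : p ∈ Ioo 0 (2 * π)) (hq : q ∈ Icc 0 (2 * π)) :
    collisionKernel p q = reducedKernel (p / 2) (π - q / 2) := by
  have hcot : cot ((p / 2 + (π - q / 2)) / 2) = tan ((q - p) / 4) := by
    rw [← tan_inv_eq_cot, ← tan_pi_div_two_sub]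
    congr 1
    ring
  have hF : Fplus p q = reflectedF (p / 2) (π - q / 2) := by
    rw [Fplus, reflectedF, cos_pi_sub, sin_pi_sub, sub_neg_eq_add]
  rw [collisionKernel, reducedKernel, hcot, sin_pi_sub, mul_right_comm,
    omega_resH_mul_omega hp hq, omega_eq_sin hq, hF]
  ring

lemma intervalIntegrable_collisionKernel (hp : p ∈ Ioo 0 (2 * π)) :
    IntervalIntegrable (collisionKernel p) volume 0 (2 * π) := by
  have hx : p / 2 ∈ Ioo 0 π := ⟨by linarith [hp.1], by linarith [hp.2]⟩
  have h := ((intervalIntegrable_reducedKernel hx).comp_sub_left π).comp_mul_left (c := 2⁻¹)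
  simp only [sub_zero, sub_self, div_inv_eq_mul, zero_mul, mul_comm π] at h
  refine h.symm.congr fun q hq ↦ ?_
  rw [uIoc_of_le two_pi_pos.le] at hq
  rw [collisionKernel_eq_reducedKernel hp (Ioc_subset_Icc_self hq), div_eq_inv_mul q]

lemma integral_collisionKernel (hp : p ∈ Ioo 0 (2 * π)) :
    ∫ q in (0 : ℝ)..(2 * π), collisionKernel p q =
      2 * ∫ u in (0 : ℝ)..π, reducedKernel (p / 2) u := by
  have hcongr : ∫ q in (0 : ℝ)..(2 * π), collisionKernel p q =
      ∫ q in (0 : ℝ)..(2 * π), reducedKernel (p / 2) (π - q / 2) := by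
    refine intervalIntegral.integral_congr fun q hq ↦ collisionKernel_eq_reducedKernel hp ?_
    rwa [uIcc_of_le two_pi_pos.le] at hq
  rw [hcongr, intervalIntegral.integral_comp_sub_div (reducedKernel (p / 2)) two_ne_zero π]
  simp

lemma integral_collisionKernel_mem_Icc (hp : p ∈ Ioo 0 (2 * π)) (ht0 : 0 < t)
    (hpt : sin (p / 2) = t ^ 3) :
    ∫ q in (0 : ℝ)..(2 * π), collisionKernel p q ∈
      Icc (t ^ 2 / 40000) ((32 + 16 * π ^ 2) * t ^ 2) := by
  have hx : p / 2 ∈ Ioo 0 π := ⟨by linarith [hp.1], by linarith [hp.2]⟩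
  obtain ⟨hlower, hupper⟩ := integral_reducedKernel_mem_Icc hx ht0 hpt
  rw [integral_collisionKernel hp]
  exact ⟨by linarith, by linarith⟩

end CollisionKernel

/-- The collision frequency with an arbitrary equilibrium profile `f` in place of the
Rayleigh–Jeans profile. -/
def collisionFrequency (f : ℝ → ℝ) (p : ℝ) : ℝ :=
  ω p / f p *
    ∫ q in (0 : ℝ)..(2 * π),
      ω (resH p q) * ω q * ω (p + resH p q - q) *
        (f (resH p q) * f q * f (p + resH p q - q)) / √(Fplus p q)

section CollisionFrequency

variable {f : ℝ → ℝ} {m M p t : ℝ}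

lemma measurable_resH (p : ℝ) : Measurable (resH p) := by
  unfold resH
  simp only [tan_eq_sin_div_cos]
  fun_prop

lemma collisionFrequency_eq_integral_collisionKernel (f : ℝ → ℝ) (p : ℝ) :
    collisionFrequency f p = ω p / f p * ∫ q in (0 : ℝ)..(2 * π),
      f (resH p q) * f q * f (p + resH p q - q) * collisionKernel p q := by
  rw [collisionFrequency]
  congr 2 with q
  rw [collisionKernel]
  ring

lemma mul_mul_mem_Icc_pow_three {a b c : ℝ} (hm : 0 ≤ m) (ha : a ∈ Icc m M) (hb : b ∈ Icc m M)
    (hc : c ∈ Icc m M) : a * b * c ∈ Icc (m ^ 3) (M ^ 3) := by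
  obtain ⟨hma, haM⟩ := ha
  obtain ⟨hmb, hbM⟩ := hb
  obtain ⟨hmc, hcM⟩ := hc
  have ha0 := hm.trans hma
  have hb0 := hm.trans hmb
  have hc0 := hm.trans hmc
  have hM0 := ha0.trans haM
  rw [pow_three', pow_three']
  constructor <;> gcongr

lemma collisionFrequency_mem_Icc (hf : Measurable f) (hm : 0 < m) (hfmM : ∀ p, f p ∈ Icc m M)
    (hp : p ∈ Ioo 0 (2 * π)) (ht0 : 0 < t) (hpt : sin (p / 2) = t ^ 3) :
    collisionFrequency f p ∈
      Icc (m ^ 3 / (40000 * M) * t ^ 5) (M ^ 3 * (32 + 16 * π ^ 2) / m * t ^ 5) := by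
  have hweight : Measurable fun q ↦ f (resH p q) * f q * f (p + resH p q - q) := by
    have hresH := measurable_resH p
    fun_prop
  obtain ⟨hlower, hupper⟩ := integral_mul_mem_Icc two_pi_pos.le
    (intervalIntegrable_collisionKernel hp) (collisionKernel_nonneg p) hweight
    fun q ↦ mul_mul_mem_Icc_pow_three hm.le (hfmM _) (hfmM _) (hfmM _)
  obtain ⟨hKlower, hKupper⟩ := integral_collisionKernel_mem_Icc hp ht0 hpt
  obtain ⟨hmf, hfM⟩ := hfmM p
  have hf0 : 0 < f p := hm.trans_le hmf
  have hM0 : 0 < M := hf0.trans_le hfM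
  rw [collisionFrequency_eq_integral_collisionKernel, omega_eq_sin (Ioo_subset_Icc_self hp), hpt]
  set J := ∫ q in (0 : ℝ)..(2 * π), f (resH p q) * f q * f (p + resH p q - q) * collisionKernel p q
  have hJlower : m ^ 3 * (t ^ 2 / 40000) ≤ J := le_trans (by gcongr) hlower
  have hJupper : J ≤ M ^ 3 * ((32 + 16 * π ^ 2) * t ^ 2) := hupper.trans (by gcongr)
  have hJ0 : 0 ≤ J := le_trans (by positivity) hJlower
  constructor
  · calc m ^ 3 / (40000 * M) * t ^ 5 = t ^ 3 / M * (m ^ 3 * (t ^ 2 / 40000)) := by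
          field_simp
      _ ≤ t ^ 3 / f p * J := by gcongr
  · calc t ^ 3 / f p * J ≤ t ^ 3 / m * (M ^ 3 * ((32 + 16 * π ^ 2) * t ^ 2)) := by gcongr
      _ = M ^ 3 * (32 + 16 * π ^ 2) / m * t ^ 5 := by ring

lemma collisionFrequency_eq_zero_of_sin_eq_zero (f : ℝ → ℝ) (hp : sin (p / 2) = 0) :
    collisionFrequency f p = 0 := by
  rw [collisionFrequency, ω, hp, abs_zero, zero_div, zero_mul]

lemma exists_pow_three_eq_and_rpow_eq_pow_five {s : ℝ} (hs : 0 < s) :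
    ∃ t : ℝ, 0 < t ∧ s = t ^ 3 ∧ s ^ ((5 : ℝ) / 3) = t ^ 5 := by
  refine ⟨s ^ ((1 : ℝ) / 3), rpow_pos_of_pos hs _, ?_, ?_⟩ <;>
  · rw [← rpow_mul_natCast hs.le]
    norm_num

end CollisionFrequency

theorem stmt8_general {f : ℝ → ℝ} {m M : ℝ} (hf : Measurable f) (hm : 0 < m)
    (hfmM : ∀ p, f p ∈ Icc m M) :
    ∃ c C : ℝ, 0 < c ∧ 0 < C ∧ ∀ p ∈ Icc (0 : ℝ) (2 * π),
      (c * sin (p / 2) ^ ((5 : ℝ) / 3) ≤ collisionFrequency f p ∧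
        collisionFrequency f p ≤ C * sin (p / 2) ^ ((5 : ℝ) / 3)) ∧
      (0 ≤ collisionFrequency f p ∧ (collisionFrequency f p = 0 ↔ p = 0 ∨ p = 2 * π)) := by
  have hM : 0 < M := hm.trans_le ((hfmM 0).1.trans (hfmM 0).2)
  refine ⟨m ^ 3 / (40000 * M), M ^ 3 * (32 + 16 * π ^ 2) / m, by positivity, by positivity,
    fun p hp ↦ ?_⟩
  by_cases hend : p = 0 ∨ p = 2 * π
  · have hsin : sin (p / 2) = 0 := by rcases hend with rfl | rfl <;> simp
    have hzero := collisionFrequency_eq_zero_of_sin_eq_zero f hsin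
    simp [hzero, hsin, hend]
  · push Not at hend
    have hp' : p ∈ Ioo 0 (2 * π) := ⟨hp.1.lt_of_ne' hend.1, hp.2.lt_of_ne hend.2⟩
    have hsin : 0 < sin (p / 2) :=
      sin_pos_of_pos_of_lt_pi (by linarith [hp'.1]) (by linarith [hp'.2])
    obtain ⟨t, ht0, hpt, hpt5⟩ := exists_pow_three_eq_and_rpow_eq_pow_five hsin
    have hbounds := collisionFrequency_mem_Icc hf hm hfmM hp' ht0 hpt
    have hpos : 0 < collisionFrequency f p := lt_of_lt_of_le (by positivity) hbounds.1
    rw [hpt5]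
    exact ⟨hbounds, hpos.le, by simp [hpos.ne', hend]⟩

section RayleighJeans

variable {β γ : ℝ}

lemma measurable_fRJ (β γ : ℝ) : Measurable (fRJ β γ) := by
  unfold fRJ ω
  fun_prop

lemma fRJ_mem_Icc (hβ : 0 ≤ β) (hγ : 0 < γ) (p : ℝ) :
    fRJ β γ p ∈ Icc (1 / (β + γ)) (1 / γ) := by
  have hω0 := omega_nonneg p
  have hω1 : β * ω p ≤ β := mul_le_of_le_one_right hβ (abs_sin_le_one _)
  rw [fRJ]
  exact ⟨by gcongr, by gcongr; linarith [mul_nonneg hβ hω0]⟩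

end RayleighJeans

/-- **Asymptotics of the collision frequency for non-zero mass:** for `β, γ > 0`,
`a(p) ∼_{β,γ} sin(p/2)^{5/3}` on `[0,2π]`; in particular `a` is nonnegative there and
vanishes only at `p = 0` and `p = 2π`. -/
theorem stmt8 (β γ : ℝ) (hβ : 0 < β) (hγ : 0 < γ) :
    ∃ c C : ℝ, 0 < c ∧ 0 < C ∧ ∀ p ∈ Set.Icc (0:ℝ) (2 * π),
      (c * Real.sin (p / 2) ^ ((5:ℝ)/3) ≤ afreq β γ p ∧
        afreq β γ p ≤ C * Real.sin (p / 2) ^ ((5:ℝ)/3)) ∧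
      (0 ≤ afreq β γ p ∧ (afreq β γ p = 0 ↔ p = 0 ∨ p = 2 * π)) :=
  stmt8_general (measurable_fRJ β γ) (by positivity) (fRJ_mem_Icc hβ.le hγ)
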